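/- arXiv:2404.16231 — 2 statements merged into one kernel-verified Lean document; each statement's English description precedes it below -/
import Mathlib

section
/- Invertibility: for each logical inference step of μHKA with conclusion Γ → S and premisses Γ_0 → S_0, …, Γ_{k-1} → S_{k-1}, if L(Γ) ⊆ L(S) then L(Γ_i) ⊆ L(S_i) for each i < k. -/
/-!
Every logical rule replaces a cedent by cedents whose total language is the same: `langCed` is a
product, so the rules for `0`, `1`, `·`, `+` are the idempotent semiring laws of languages, and the
rules for `μ` amount to `langOf e.unfold = langOf (μX e)` (`langOf_unfold`). The latter combines the
substitution lemma `sem_subst` with the Knaster–Tarski equation for `A ↦ ⟦e⟧(A)`, which is monotone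
by `sem_mono`. On the right the two hypersequents thus have equal languages; on the left the
language of a premiss equals, or for `+` is contained in, that of the conclusion.
-/

namespace CFPT

/-- `μ`-expressions over alphabet `α`, with de Bruijn indices for variables. -/
inductive Exp (α : Type) : Type
  | zero : Exp α
  | one : Exp α
  | var (n : ℕ) : Exp α
  | tok (a : α) : Exp α
  | plus (e f : Exp α) : Exp α
  | times (e f : Exp α) : Exp α
  | mu (e : Exp α) : Exp α
  deriving DecidableEq

namespace Exp

variable {α : Type}

/-- all de Bruijn indices are `< k` -/
def ClosedUnder : ℕ → Exp α → Prop
  | _, zero => True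
  | _, one => True
  | k, var n => n < k
  | _, tok _ => True
  | k, plus e f => ClosedUnder k e ∧ ClosedUnder k f
  | k, times e f => ClosedUnder k e ∧ ClosedUnder k f
  | k, mu e => ClosedUnder (k + 1) e

def Closed (e : Exp α) : Prop := ClosedUnder 0 e

/-- substitute the closed expression `g` for de Bruijn variable `d`. -/
def subst (g : Exp α) : ℕ → Exp α → Exp α
  | _, zero => zero
  | _, one => one
  | d, var n => if n = d then g else var n
  | _, tok a => tok a
  | d, plus e f => plus (subst g d e) (subst g d f)
  | d, times e f => times (subst g d e) (subst g d f)
  | d, mu e => mu (subst g (d + 1) e)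

/-- the unfolding `e(μX e)` of the fixed point `μX e` (given by its body `e`). -/
def unfold (e : Exp α) : Exp α := subst (mu e) 0 e

/-- the approximants `e^n(0)` of `μX e` (given by its body `e`):
`e^0(0) = 0` and `e^(n+1)(0) = e(e^n(0))`. -/
def iter (e : Exp α) : ℕ → Exp α
  | 0 => zero
  | n + 1 => subst (iter e n) 0 e

/-- left-productive expressions: `p ::= a | p+q | p·e | μX p` -/
inductive LeftProductive : Exp α → Prop
  | tok (a : α) : LeftProductive (tok a)
  | plus {p q} : LeftProductive p → LeftProductive q → LeftProductive (plus p q)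
  | times {p} (e) : LeftProductive p → LeftProductive (times p e)
  | mu {p} : LeftProductive p → LeftProductive (mu p)

/-- productive expressions: `p ::= a | p+q | p·e | e·p | μX p` -/
inductive Productive : Exp α → Prop
  | tok (a : α) : Productive (tok a)
  | plus {p q} : Productive p → Productive q → Productive (plus p q)
  | timesL {p} (e) : Productive p → Productive (times p e)
  | timesR {p} (e) : Productive p → Productive (times e p)
  | mu {p} : Productive p → Productive (mu p)

/-- every free occurrence of variable `n` in the expression occurs inside a
subexpression (in which it remains free) satisfying `P`. -/
def GuardVar (P : Exp α → Prop) : ℕ → Exp α → Prop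
  | _, zero => True
  | _, one => True
  | _, tok _ => True
  | n, var m => P (var m) ∨ m ≠ n
  | n, plus e f => P (plus e f) ∨ (GuardVar P n e ∧ GuardVar P n f)
  | n, times e f => P (times e f) ∨ (GuardVar P n e ∧ GuardVar P n f)
  | n, mu e => P (mu e) ∨ GuardVar P (n + 1) e

/-- each variable occurrence occurs free in a subexpression satisfying `P`. -/
def GuardedBy (P : Exp α → Prop) : Exp α → Prop
  | zero => True
  | one => True
  | var _ => True
  | tok _ => True
  | plus e f => GuardedBy P e ∧ GuardedBy P f
  | times e f => GuardedBy P e ∧ GuardedBy P f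
  | mu e => GuardVar P 0 e ∧ GuardedBy P e

/-- each variable occurrence occurs free in a productive subexpression. -/
def Guarded (e : Exp α) : Prop := GuardedBy Productive e

/-- each variable occurrence occurs free in a left-productive subexpression. -/
def LeftGuarded (e : Exp α) : Prop := GuardedBy LeftProductive e

end Exp

/-- extend an environment by a new language for variable `0`. -/
def consEnv {α} (A : Language α) (ρ : ℕ → Language α) : ℕ → Language α
  | 0 => A
  | n + 1 => ρ n

/-- language semantics of `μ`-expressions, relative to an environment;
`μX e` denotes the least fixed point of `A ↦ ⟦e⟧(A)` (Knaster–Tarski). -/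
def sem {α} (ρ : ℕ → Language α) : Exp α → Language α
  | .zero => 0
  | .one => 1
  | .var n => ρ n
  | .tok a => {[a]}
  | .plus e f => sem ρ e + sem ρ f
  | .times e f => sem ρ e * sem ρ f
  | .mu e => sInf {A : Language α | sem (consEnv A ρ) e ≤ A}

/-- the language of a (closed) expression. -/
def langOf {α} (e : Exp α) : Language α := sem (fun _ => 0) e

/-- a cedent: a finite list of expressions. -/
abbrev Cedent (α : Type) := List (Exp α)

/-- language of a cedent: the concatenation (product) of its members' languages. -/
def langCed {α} (Γ : Cedent α) : Language α := (Γ.map langOf).prod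

/-- right-hand side of a hypersequent: a finite set of cedents. -/
abbrev RHSet (α : Type) := Finset (Cedent α)

/-- language of a RHS: the union (sum) of the languages of its cedents. -/
def langRHS {α} (S : RHSet α) : Language α := S.sup langCed

def CedClosed {α} (Γ : Cedent α) : Prop := ∀ e ∈ Γ, e.Closed
def CedGuarded {α} (Γ : Cedent α) : Prop := ∀ e ∈ Γ, e.Guarded

/-- a hypersequent `Γ → S`. -/
structure Sqt (α : Type) : Type where
  lhs : Cedent α
  rhs : RHSet α

/-- validity of a hypersequent in the language model. -/
def Sqt.Valid {α} (s : Sqt α) : Prop := langCed s.lhs ≤ langRHS s.rhs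

def Sqt.ClosedSeq {α} (s : Sqt α) : Prop :=
  CedClosed s.lhs ∧ ∀ Δ ∈ s.rhs, CedClosed Δ

def Sqt.GuardedSeq {α} (s : Sqt α) : Prop :=
  CedGuarded s.lhs ∧ ∀ Δ ∈ s.rhs, CedGuarded Δ

/-- rule instances of the hypersequential system `μHKA`. -/
inductive Rule (α : Type) : Type
  | init : Rule α
  | wr (Γ : Cedent α) (S : RHSet α) (Δ : Cedent α) : Rule α
  | kl (a : α) (Γ : Cedent α) (S : RHSet α) : Rule α
  | kr (a : α) (Γ : Cedent α) (S : RHSet α) : Rule α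
  | zeroL (Γ Γ' : Cedent α) (S : RHSet α) : Rule α
  | oneL (Γ Γ' : Cedent α) (S : RHSet α) : Rule α
  | timesL (Γ : Cedent α) (e f : Exp α) (Γ' : Cedent α) (S : RHSet α) : Rule α
  | plusL (Γ : Cedent α) (e f : Exp α) (Γ' : Cedent α) (S : RHSet α) : Rule α
  | muL (Γ : Cedent α) (e : Exp α) (Γ' : Cedent α) (S : RHSet α) : Rule α
  | zeroR (Γ : Cedent α) (S : RHSet α) (Δ Δ' : Cedent α) : Rule α
  | oneR (Γ : Cedent α) (S : RHSet α) (Δ Δ' : Cedent α) : Rule α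
  | timesR (Γ : Cedent α) (S : RHSet α) (Δ : Cedent α) (e f : Exp α) (Δ' : Cedent α) : Rule α
  | plusR (Γ : Cedent α) (S : RHSet α) (Δ : Cedent α) (e f : Exp α) (Δ' : Cedent α) : Rule α
  | muR (Γ : Cedent α) (S : RHSet α) (Δ : Cedent α) (e : Exp α) (Δ' : Cedent α) : Rule α

namespace Rule

variable {α : Type} [DecidableEq α]

/-- conclusion of a rule instance. -/
def concl : Rule α → Sqt α
  | init => ⟨[], {[]}⟩
  | wr Γ S Δ => ⟨Γ, insert Δ S⟩
  | kl a Γ S => ⟨.tok a :: Γ, S.image (Exp.tok a :: ·)⟩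
  | kr a Γ S => ⟨Γ ++ [.tok a], S.image (· ++ [Exp.tok a])⟩
  | zeroL Γ Γ' S => ⟨Γ ++ .zero :: Γ', S⟩
  | oneL Γ Γ' S => ⟨Γ ++ .one :: Γ', S⟩
  | timesL Γ e f Γ' S => ⟨Γ ++ .times e f :: Γ', S⟩
  | plusL Γ e f Γ' S => ⟨Γ ++ .plus e f :: Γ', S⟩
  | muL Γ e Γ' S => ⟨Γ ++ .mu e :: Γ', S⟩
  | zeroR Γ S Δ Δ' => ⟨Γ, insert (Δ ++ .zero :: Δ') S⟩
  | oneR Γ S Δ Δ' => ⟨Γ, insert (Δ ++ .one :: Δ') S⟩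
  | timesR Γ S Δ e f Δ' => ⟨Γ, insert (Δ ++ .times e f :: Δ') S⟩
  | plusR Γ S Δ e f Δ' => ⟨Γ, insert (Δ ++ .plus e f :: Δ') S⟩
  | muR Γ S Δ e Δ' => ⟨Γ, insert (Δ ++ .mu e :: Δ') S⟩

/-- list of premisses of a rule instance. -/
def prems : Rule α → List (Sqt α)
  | init => []
  | wr Γ S _ => [⟨Γ, S⟩]
  | kl _ Γ S => [⟨Γ, S⟩]
  | kr _ Γ S => [⟨Γ, S⟩]
  | zeroL _ _ _ => []
  | oneL Γ Γ' S => [⟨Γ ++ Γ', S⟩]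
  | timesL Γ e f Γ' S => [⟨Γ ++ e :: f :: Γ', S⟩]
  | plusL Γ e f Γ' S => [⟨Γ ++ e :: Γ', S⟩, ⟨Γ ++ f :: Γ', S⟩]
  | muL Γ e Γ' S => [⟨Γ ++ e.unfold :: Γ', S⟩]
  | zeroR Γ S _ _ => [⟨Γ, S⟩]
  | oneR Γ S Δ Δ' => [⟨Γ, insert (Δ ++ Δ') S⟩]
  | timesR Γ S Δ e f Δ' => [⟨Γ, insert (Δ ++ e :: f :: Δ') S⟩]
  | plusR Γ S Δ e f Δ' => [⟨Γ, insert (Δ ++ e :: Δ') (insert (Δ ++ f :: Δ') S)⟩]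
  | muR Γ S Δ e Δ' => [⟨Γ, insert (Δ ++ e.unfold :: Δ') S⟩]

/-- the rule is an instance of `μ-l`. -/
def IsMuL : Rule α → Prop
  | muL _ _ _ _ => True
  | _ => False

/-- logical rules (neither `init`, weakening, nor `k` rules). -/
def IsLogical : Rule α → Prop
  | init => False
  | wr _ _ _ => False
  | kl _ _ _ => False
  | kr _ _ _ => False
  | _ => True

/-- immediate ancestry on the LHS: the formula at position `j` of the LHS of a
premiss is the immediate ancestor of the formula at position `ancL r j` of the
LHS of the conclusion. -/
def ancL : Rule α → ℕ → ℕ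
  | kl _ _ _ => fun j => j + 1
  | oneL Γ _ _ => fun j => if j < Γ.length then j else j + 1
  | timesL Γ _ _ _ _ => fun j =>
      if j < Γ.length then j else if j ≤ Γ.length + 1 then Γ.length else j - 1
  | _ => fun j => j

/-- position `j` of the LHS of the conclusion is principal for a `μ-l` step. -/
def IsPrincMuL : Rule α → ℕ → Prop
  | muL Γ _ _ _, j => j = Γ.length
  | _, _ => False

end Rule

/-- a (non-wellfounded) preproof of `μHKA`: a possibly infinite tree of rule
instances, represented by its labelling of tree positions. -/
structure Preproof (α : Type) [DecidableEq α] : Type where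
  rule : List ℕ → Option (Rule α)
  root_isSome : (rule []).isSome
  children_concl : ∀ p r, rule p = some r → ∀ (i : ℕ) (h : i < r.prems.length),
    ∃ r', rule (p ++ [i]) = some r' ∧ r'.concl = r.prems.get ⟨i, h⟩
  children_none : ∀ p r, rule p = some r → ∀ i : ℕ, r.prems.length ≤ i → rule (p ++ [i]) = none
  grounded : ∀ p i, (rule (p ++ [i])).isSome → (rule p).isSome

namespace Preproof

variable {α : Type} [DecidableEq α]

/-- the preproof has endsequent `s`. -/
def Concl (P : Preproof α) (s : Sqt α) : Prop :=
  ∃ r, P.rule [] = some r ∧ r.concl = s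

/-- the node of a branch `b` at depth `n`. -/
def pathOf (b : ℕ → ℕ) (n : ℕ) : List ℕ := (List.range n).map b

/-- `b` describes an infinite branch of `P`. -/
def IsBranch (P : Preproof α) (b : ℕ → ℕ) : Prop :=
  ∀ n, (P.rule (pathOf b n)).isSome

/-- `P` is progressing: every infinite branch has infinitely many `μ-l` steps. -/
def Progressing (P : Preproof α) : Prop :=
  ∀ b, P.IsBranch b → ∀ N, ∃ n, N ≤ n ∧ ∃ r, P.rule (pathOf b n) = some r ∧ r.IsMuL

end Preproof

/-- `μHKA ⊢∞ s` : the hypersequent `s` has a progressing non-wellfounded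
(`∞`-)proof in `μHKA`. -/
def ProofInf {α : Type} [DecidableEq α] (s : Sqt α) : Prop :=
  ∃ P : Preproof α, P.Concl s ∧ P.Progressing

/-- wellfounded (possibly infinitely branching) derivability in `μHKA_ω`,
the extension of `μHKA` by the `ω`-rule. -/
inductive DerivW {α : Type} [DecidableEq α] : Sqt α → Prop
  | rule (r : Rule α) : (∀ s ∈ r.prems, DerivW s) → DerivW r.concl
  | omega (Γ : Cedent α) (e : Exp α) (Γ' : Cedent α) (S : RHSet α) :
      (∀ n : ℕ, DerivW ⟨Γ ++ Exp.iter e n :: Γ', S⟩) → DerivW ⟨Γ ++ .mu e :: Γ', S⟩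

/-- the equational theory `μCA` of `μ`-continuous Chomsky algebras:
idempotent semiring (dioid) axioms together with `μ`-continuity. -/
inductive CA {α : Type} : Exp α → Exp α → Prop
  | refl (e) : CA e e
  | symm {e f} : CA e f → CA f e
  | trans {e f g} : CA e f → CA f g → CA e g
  | congPlus {e e' f f'} : CA e e' → CA f f' → CA (.plus e f) (.plus e' f')
  | congTimes {e e' f f'} : CA e e' → CA f f' → CA (.times e f) (.times e' f')
  | plusAssoc (e f g) : CA (.plus (.plus e f) g) (.plus e (.plus f g))
  | plusComm (e f) : CA (.plus e f) (.plus f e)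
  | plusIdem (e) : CA (.plus e e) e
  | plusZero (e) : CA (.plus e .zero) e
  | timesAssoc (e f g) : CA (.times (.times e f) g) (.times e (.times f g))
  | timesOne (e) : CA (.times e .one) e
  | oneTimes (e) : CA (.times .one e) e
  | timesZero (e) : CA (.times e .zero) .zero
  | zeroTimes (e) : CA (.times .zero e) .zero
  | distL (e f g) : CA (.times e (.plus f g)) (.plus (.times e f) (.times e g))
  | distR (e f g) : CA (.times (.plus e f) g) (.plus (.times e g) (.times f g))
  | muContLe (e f g : Exp α) (n : ℕ) :
      CA (.plus (.times e (.times (Exp.iter f n) g)) (.times e (.times (.mu f) g)))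
         (.times e (.times (.mu f) g))
  | muContSup (e f g h : Exp α) :
      (∀ n : ℕ, CA (.plus (.times e (.times (Exp.iter f n) g)) h) h) →
      CA (.plus (.times e (.times (.mu f) g)) h) h

/-- the natural order `e ≤ f` of `μCA`, i.e. `e + f = f`. -/
def CAle {α : Type} (e f : Exp α) : Prop := CA (.plus e f) f

/-- the product `∏Γ` of a cedent as an expression. -/
def prodCed {α} (Γ : Cedent α) : Exp α := Γ.foldr .times .one

/-- the sum `Σ_{Δ∈S} ∏Δ` of a RHS as an expression. -/
noncomputable def sumRHS {α} (S : RHSet α) : Exp α := (S.toList.map prodCed).foldr .plus .zero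

/-! ### Monotonicity, fixed points and substitution -/

section

variable {α : Type}

theorem consEnv_mono {A B : Language α} {ρ σ : ℕ → Language α} (hAB : A ≤ B) (h : ∀ n, ρ n ≤ σ n) :
    ∀ n, consEnv A ρ n ≤ consEnv B σ n
  | 0 => hAB
  | n + 1 => h n

theorem sem_mono (e : Exp α) : ∀ {ρ σ : ℕ → Language α}, (∀ n, ρ n ≤ σ n) → sem ρ e ≤ sem σ e := by
  induction e with
  | zero => intros; exact le_rfl
  | one => intros; exact le_rfl
  | var n => intro ρ σ h; exact h n
  | tok a => intros; exact le_rfl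
  | plus e f ihe ihf => intro ρ σ h; exact add_le_add (ihe h) (ihf h)
  | times e f ihe ihf => intro ρ σ h; exact mul_le_mul' (ihe h) (ihf h)
  | mu e ih =>
    intro ρ σ h
    exact sInf_le_sInf fun A (hA : _ ≤ A) => (ih (consEnv_mono le_rfl h)).trans hA

/-- Knaster–Tarski: `sem ρ (.mu e)` is by definition `OrderHom.lfp` of `A ↦ sem (consEnv A ρ) e`. -/
theorem sem_mu_fixed (ρ : ℕ → Language α) (e : Exp α) :
    sem (consEnv (sem ρ (.mu e)) ρ) e = sem ρ (.mu e) :=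
  OrderHom.map_lfp (⟨fun A => sem (consEnv A ρ) e,
    fun _ _ h => sem_mono e (consEnv_mono h fun _ => le_rfl)⟩ : Language α →o Language α)

theorem sem_congr (e : Exp α) : ∀ {k : ℕ} {ρ σ : ℕ → Language α}, e.ClosedUnder k →
    (∀ n < k, ρ n = σ n) → sem ρ e = sem σ e := by
  induction e with
  | zero => intros; rfl
  | one => intros; rfl
  | var n => intro k ρ σ hc h; exact h n hc
  | tok a => intros; rfl
  | plus e f ihe ihf => intro k ρ σ hc h; simp only [sem, ihe hc.1 h, ihf hc.2 h]
  | times e f ihe ihf => intro k ρ σ hc h; simp only [sem, ihe hc.1 h, ihf hc.2 h]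
  | mu e ih =>
    intro k ρ σ hc h
    have key : ∀ A, sem (consEnv A ρ) e = sem (consEnv A σ) e := fun A => by
      refine ih (k := k + 1) hc fun n hn => ?_
      cases n with
      | zero => rfl
      | succ n => exact h n (Nat.lt_of_succ_lt_succ hn)
    simp only [sem, key]

theorem sem_closed {g : Exp α} (hg : g.Closed) (ρ : ℕ → Language α) : sem ρ g = langOf g :=
  sem_congr g hg fun _ hn => absurd hn (Nat.not_lt_zero _)

theorem consEnv_update (A B : Language α) (ρ : ℕ → Language α) (d : ℕ) :
    consEnv A (Function.update ρ d B) = Function.update (consEnv A ρ) (d + 1) B := by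
  funext n
  cases n <;> simp [consEnv, Function.update_apply]

/-- The substitution lemma. As `subst` does not lower the indices above `d`, the environment is
updated at `d` rather than extended, and no bound on the free variables of `e` is needed. -/
theorem sem_subst {g : Exp α} (hg : g.Closed) (e : Exp α) : ∀ (d : ℕ) (ρ : ℕ → Language α),
    sem ρ (Exp.subst g d e) = sem (Function.update ρ d (langOf g)) e := by
  induction e with
  | zero => intros; rfl
  | one => intros; rfl
  | var n =>
    intro d ρ
    by_cases h : n = d
    · simp [Exp.subst, sem, h, sem_closed hg]
    · simp [Exp.subst, sem, h]
  | tok a => intros; rfl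
  | plus e f ihe ihf => intro d ρ; simp only [Exp.subst, sem, ihe, ihf]
  | times e f ihe ihf => intro d ρ; simp only [Exp.subst, sem, ihe, ihf]
  | mu e ih => intro d ρ; simp only [Exp.subst, sem, ih, consEnv_update]

theorem langOf_unfold {e : Exp α} (he : (Exp.mu e).Closed) :
    langOf e.unfold = langOf (.mu e) := by
  have henv : Function.update (fun _ : ℕ => (0 : Language α)) 0 (langOf (.mu e)) =
      consEnv (langOf (.mu e)) fun _ => 0 := by
    funext n
    cases n <;> simp [consEnv]
  calc langOf e.unfold = sem (Function.update (fun _ => 0) 0 (langOf (.mu e))) e :=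
        sem_subst he e 0 _
    _ = langOf (.mu e) := by rw [henv]; exact sem_mu_fixed _ e

/-! ### Languages of cedents and right-hand sides -/

theorem langCed_append (Γ Δ : Cedent α) : langCed (Γ ++ Δ) = langCed Γ * langCed Δ := by
  simp [langCed]

theorem langCed_cons (e : Exp α) (Γ : Cedent α) : langCed (e :: Γ) = langOf e * langCed Γ := by
  simp [langCed]

theorem langRHS_insert [DecidableEq α] (Δ : Cedent α) (S : RHSet α) :
    langRHS (insert Δ S) = langCed Δ + langRHS S := by
  simp [langRHS, Finset.sup_insert, add_eq_sup]

theorem langOf_zero : langOf (.zero : Exp α) = 0 := rfl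

theorem langOf_one : langOf (.one : Exp α) = 1 := rfl

theorem langOf_plus (e f : Exp α) : langOf (.plus e f) = langOf e + langOf f := rfl

theorem langOf_times (e f : Exp α) : langOf (.times e f) = langOf e * langOf f := rfl

end

/-- Lemma 3.6, invertibility: for each logical inference step
of `μHKA`, if the conclusion is valid then so is each premiss. -/
theorem invertibility {α : Type} [Fintype α] [DecidableEq α] (r : Rule α)
    (hr : r.IsLogical)
    (hc : r.concl.ClosedSeq) (hg : r.concl.GuardedSeq)
    (h : r.concl.Valid) :
    ∀ s ∈ r.prems, s.Valid := by
  cases r with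
  | init | wr | kl | kr => exact hr.elim
  | zeroL => simp [Rule.prems]
  | oneL | timesL | zeroR | oneR | timesR | plusR =>
    simpa [Rule.prems, Rule.concl, Sqt.Valid, langCed_append, langCed_cons, langRHS_insert,
      langOf_zero, langOf_one, langOf_plus, langOf_times, mul_add, add_mul, mul_assoc, add_assoc]
      using h
  | plusL Γ e f Γ' S =>
    simp only [Rule.prems, Rule.concl, Sqt.Valid, langCed_append, langCed_cons, langOf_plus,
      mul_add, add_mul, List.mem_cons, List.not_mem_nil, or_false, forall_eq_or_imp,
      forall_eq] at h ⊢
    exact add_le_iff.1 h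
  | muL Γ e Γ' S =>
    have he : (Exp.mu e).Closed := hc.1 _ (List.mem_append_right _ List.mem_cons_self)
    simpa [Rule.prems, Rule.concl, Sqt.Valid, langCed_append, langCed_cons, langOf_unfold he] using h
  | muR Γ S Δ e Δ' =>
    have he : (Exp.mu e).Closed := hc.2 _ (Finset.mem_insert_self _ _) _ (by simp)
    simpa [Rule.prems, Rule.concl, Sqt.Valid, langCed_append, langCed_cons, langRHS_insert,
      langOf_unfold he] using h

end CFPT
end

section
/- Soundness of μHKA_ω for μ-continuous Chomsky algebras: if the hypersequent Γ → S has a wellfounded (possibly infinitely branching) proof in μHKA_ω, then the inequality ∏Γ ≤ Σ_{Δ∈S} ∏Δ is derivable in the theory μCA. -/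
/-!
The expressions modulo provable equality in `μCA` form an idempotent semiring, in which the
hypersequent `Γ → S` reads `∏Γ ≤ ⨆_{Δ ∈ S} ∏Δ`. In any idempotent semiring the rules other than
those for `μ` preserve such inequalities, and the `ω`-rule is one half of the `μ`-continuity
axiom. What remains is that `μX e` is a fixed point of `e` (`cls_unfold`), which makes `μ-l` and
`μ-r` sound.

The fixed point property follows from the continuity of substitution (`leSup_psub`): for a chain
of closed substitutions `σ n` with supremum `τ`, where suprema are taken to be preserved by all
two-sided multiplicative contexts, `e[τ]` is the supremum of the chain `e[σ n]`. Applied to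
`σ n = e^n(0)` and `τ = μX e`, it gives `e(μX e) = ⨆ e^(n+1)(0) = μX e`. Continuity is proved by
structural induction on `e`, simultaneously for all substitutions. A product is handled by
passing to the diagonal of a double sequence. For `μX e`, an inner induction on `m` shows that
the approximant `e^m(0)`, as a function of the substitution, is continuous, since
`e^(m+1)(0)` under `σ` is `e` under `σ` extended by `X ↦ e^m(0)[σ]`; then `μX e` is the supremum
of these approximants.

Substitution in the syntax does not shift, so all of this needs closed expressions; closedness
of the endsequent propagates upwards through all the rules (`rule_prems_closed`).
-/

namespace CFPT

/-! ### The free `μ`-continuous Chomsky algebra -/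

/-- Provable equality in `μCA` as a setoid. -/
def caSetoid (α : Type) : Setoid (Exp α) := ⟨CA, CA.refl, CA.symm, CA.trans⟩

/-- The term model: all expressions (open ones included) modulo provable equality in `μCA`. -/
def TermAlg (α : Type) : Type := Quotient (caSetoid α)

/-- The class of an expression in the term model. -/
def cls {α : Type} (e : Exp α) : TermAlg α := Quotient.mk (caSetoid α) e

theorem cls_sound {α : Type} {e f : Exp α} (h : CA e f) : cls e = cls f :=
  Quotient.sound (s := caSetoid α) h

theorem cls_exact {α : Type} {e f : Exp α} (h : cls e = cls f) : CA e f :=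
  Quotient.exact (s := caSetoid α) h

theorem cls_surj {α : Type} (x : TermAlg α) : ∃ e, cls e = x :=
  Quotient.exists_rep x

instance {α : Type} : Add (TermAlg α) :=
  ⟨Quotient.map₂ Exp.plus fun _ _ h _ _ h' => CA.congPlus h h'⟩

instance {α : Type} : Mul (TermAlg α) :=
  ⟨Quotient.map₂ Exp.times fun _ _ h _ _ h' => CA.congTimes h h'⟩

instance {α : Type} : Zero (TermAlg α) := ⟨cls .zero⟩

instance {α : Type} : One (TermAlg α) := ⟨cls .one⟩

instance {α : Type} : Semiring (TermAlg α) where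
  nsmul := nsmulRec
  add_assoc := by
    rintro ⟨a⟩ ⟨b⟩ ⟨c⟩; exact cls_sound (.plusAssoc a b c)
  zero_add := by
    rintro ⟨a⟩; exact cls_sound (.trans (.plusComm _ _) (.plusZero a))
  add_zero := by
    rintro ⟨a⟩; exact cls_sound (.plusZero a)
  add_comm := by
    rintro ⟨a⟩ ⟨b⟩; exact cls_sound (.plusComm a b)
  mul_assoc := by
    rintro ⟨a⟩ ⟨b⟩ ⟨c⟩; exact cls_sound (.timesAssoc a b c)
  one_mul := by
    rintro ⟨a⟩; exact cls_sound (.oneTimes a)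
  mul_one := by
    rintro ⟨a⟩; exact cls_sound (.timesOne a)
  zero_mul := by
    rintro ⟨a⟩; exact cls_sound (.zeroTimes a)
  mul_zero := by
    rintro ⟨a⟩; exact cls_sound (.timesZero a)
  left_distrib := by
    rintro ⟨a⟩ ⟨b⟩ ⟨c⟩; exact cls_sound (.distL a b c)
  right_distrib := by
    rintro ⟨a⟩ ⟨b⟩ ⟨c⟩; exact cls_sound (.distR a b c)

instance {α : Type} : IdemSemiring (TermAlg α) :=
  .ofSemiring <| by rintro ⟨a⟩; exact cls_sound (.plusIdem a)

@[simp] theorem cls_zero {α : Type} : cls (.zero : Exp α) = 0 := rfl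
@[simp] theorem cls_one {α : Type} : cls (.one : Exp α) = 1 := rfl
@[simp] theorem cls_plus {α : Type} (e f : Exp α) : cls (.plus e f) = cls e + cls f := rfl
@[simp] theorem cls_times {α : Type} (e f : Exp α) : cls (.times e f) = cls e * cls f := rfl

theorem cls_le_iff {α : Type} {e f : Exp α} : cls e ≤ cls f ↔ CAle e f :=
  ⟨fun h => cls_exact (add_eq_right_iff_le.2 h), fun h => add_eq_right_iff_le.1 (cls_sound h)⟩

theorem cls_iter_le_mu {α : Type} (f : Exp α) (n : ℕ) : cls (f.iter n) ≤ cls (.mu f) := by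
  have h := cls_le_iff.2 (CA.muContLe .one f .one n)
  simpa using h

/-- The `ω`-rule of the term model: `μX f` is below the supremum of its approximants, in every
two-sided context. -/
theorem mu_le {α : Type} {f : Exp α} {a b c : TermAlg α}
    (h : ∀ n, a * cls (f.iter n) * b ≤ c) : a * cls (.mu f) * b ≤ c := by
  obtain ⟨a, rfl⟩ := cls_surj a
  obtain ⟨b, rfl⟩ := cls_surj b
  obtain ⟨c, rfl⟩ := cls_surj c
  rw [mul_assoc]
  simp only [mul_assoc (cls a)] at h
  exact cls_le_iff.2 (.muContSup a f b c fun n => cls_le_iff.1 (h n))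

/-! ### Simultaneous substitution of closed expressions -/

namespace Exp

variable {α : Type}

/-- Simultaneous substitution under `d` binders: the indices below `d` are left alone and the
index `d + i` is replaced by `σ i`. The entries of `σ` are not shifted when passing a binder,
so this is capture-avoiding only for closed `σ`. -/
def psub (σ : ℕ → Exp α) : ℕ → Exp α → Exp α
  | _, zero => zero
  | _, one => one
  | d, var n => if n < d then var n else σ (n - d)
  | _, tok a => tok a
  | d, plus e f => plus (psub σ d e) (psub σ d f)
  | d, times e f => times (psub σ d e) (psub σ d f)
  | d, mu e => mu (psub σ (d + 1) e)

/-- Extend a substitution by a new value for the index `0`. -/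
def scons (g : Exp α) (σ : ℕ → Exp α) : ℕ → Exp α
  | 0 => g
  | n + 1 => σ n

theorem closed_scons {g : Exp α} {σ : ℕ → Exp α} (hg : g.Closed) (hσ : ∀ i, (σ i).Closed) :
    ∀ i, (scons g σ i).Closed
  | 0 => hg
  | n + 1 => hσ n

theorem ClosedUnder.mono {e : Exp α} : ∀ {k l : ℕ}, ClosedUnder k e → k ≤ l → ClosedUnder l e := by
  induction e with
  | zero | one | tok => intros; trivial
  | var n => intro k l h hl; exact lt_of_lt_of_le h hl
  | plus e f he hf | times e f he hf => intro k l h hl; exact ⟨he h.1 hl, hf h.2 hl⟩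
  | mu e he => intro k l h hl; exact he (k := k + 1) (l := l + 1) h (by omega)

theorem ClosedUnder.subst_eq {e g : Exp α} : ∀ {k d : ℕ}, ClosedUnder k e → k ≤ d →
    subst g d e = e := by
  induction e with
  | zero | one | tok => intros; rfl
  | var n =>
    intro k d h hd
    have : n < k := h
    simp [subst, show n ≠ d by omega]
  | plus e f he hf | times e f he hf => intro k d h hd; simp [subst, he h.1 hd, hf h.2 hd]
  | mu e he =>
    intro k d h hd
    simp [subst, he (k := k + 1) (d := d + 1) h (by omega)]

theorem closedUnder_psub {σ : ℕ → Exp α} (hσ : ∀ i, (σ i).Closed) (e : Exp α) :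
    ∀ d, ClosedUnder d (psub σ d e) := by
  induction e with
  | zero | one | tok => intros; trivial
  | var n =>
    intro d
    by_cases h : n < d
    · simpa [psub, h] using (show ClosedUnder d (var n) from h)
    · simpa [psub, h] using (hσ (n - d)).mono (Nat.zero_le d)
  | plus e f he hf | times e f he hf => intro d; exact ⟨he d, hf d⟩
  | mu e he => intro d; exact he (d + 1)

theorem subst_psub {σ : ℕ → Exp α} (hσ : ∀ i, (σ i).Closed) (g e : Exp α) :
    ∀ d, subst g d (psub σ (d + 1) e) = psub (scons g σ) d e := by
  induction e with
  | zero | one | tok => intros; rfl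
  | var n =>
    intro d
    rcases lt_trichotomy n d with h | rfl | h
    · simp [psub, subst, show n < d + 1 by omega, h, h.ne]
    · simp [psub, subst, scons]
    · obtain ⟨m, rfl⟩ := Nat.exists_eq_add_of_lt h
      have h1 : ¬ d + m + 1 < d + 1 := by omega
      have h2 : ¬ d + m + 1 < d := by omega
      have h3 : d + m + 1 - d = m + 1 := by omega
      have h4 : d + m + 1 - (d + 1) = m := by omega
      simp only [psub, h1, h2, h3, h4, if_false, scons]
      exact (hσ _).subst_eq (Nat.zero_le d)
  | plus e f he hf | times e f he hf => intro d; simp [psub, subst, he, hf]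
  | mu e he => intro d; simp [psub, subst, he]

theorem subst_eq_psub {g e : Exp α} : ∀ {d}, ClosedUnder (d + 1) e →
    subst g d e = psub (fun _ => g) d e := by
  induction e with
  | zero | one | tok => intros; rfl
  | var n =>
    intro d h
    have : n < d + 1 := h
    rcases Nat.lt_succ_iff_lt_or_eq.1 this with h | rfl
    · simp [psub, subst, h, h.ne]
    · simp [psub, subst]
  | plus e f he hf | times e f he hf => intro d h; simp [psub, subst, he h.1, hf h.2]
  | mu e he => intro d h; simp only [psub, subst]; rw [he h]

theorem iter_psub_succ {σ : ℕ → Exp α} (hσ : ∀ i, (σ i).Closed) (e : Exp α) (n : ℕ) :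
    iter (psub σ 1 e) (n + 1) = psub (scons (iter (psub σ 1 e) n) σ) 0 e :=
  subst_psub hσ _ e 0

theorem closed_iter_psub {σ : ℕ → Exp α} (hσ : ∀ i, (σ i).Closed) (e : Exp α) :
    ∀ n, (iter (psub σ 1 e) n).Closed
  | 0 => trivial
  | n + 1 => by
    rw [iter_psub_succ hσ]
    exact closedUnder_psub (closed_scons (closed_iter_psub hσ e n) hσ) e 0

theorem closed_iter {e : Exp α} (he : ClosedUnder 1 e) : ∀ n, (iter e n).Closed
  | 0 => trivial
  | n + 1 => by
    rw [iter, subst_eq_psub he]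
    exact closedUnder_psub (fun _ => closed_iter he n) e 0

theorem closed_unfold {e : Exp α} (he : ClosedUnder 1 e) : e.unfold.Closed := by
  rw [unfold, subst_eq_psub he]
  exact closedUnder_psub (fun _ => (show (mu e).Closed from he)) e 0

end Exp

/-! ### Monotonicity and continuity of substitution -/

section Continuity

open Exp

variable {α : Type}

theorem cls_psub_mono (e : Exp α) : ∀ {σ τ : ℕ → Exp α}, (∀ i, (σ i).Closed) →
    (∀ i, (τ i).Closed) → (∀ i, cls (σ i) ≤ cls (τ i)) →
    cls (psub σ 0 e) ≤ cls (psub τ 0 e) := by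
  induction e with
  | zero | one | tok => intros; exact le_rfl
  | var n => intro σ τ _ _ h; exact h n
  | plus e f he hf =>
    intro σ τ hσ hτ h
    exact add_le_add (he hσ hτ h) (hf hσ hτ h)
  | times e f he hf =>
    intro σ τ hσ hτ h
    exact mul_le_mul' (he hσ hτ h) (hf hσ hτ h)
  | mu e he =>
    intro σ τ hσ hτ h
    have key : ∀ n, cls (iter (psub σ 1 e) n) ≤ cls (iter (psub τ 1 e) n) := by
      intro n
      induction n with
      | zero => exact le_rfl
      | succ n ih =>
        rw [iter_psub_succ hσ, iter_psub_succ hτ]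
        refine he (closed_scons (closed_iter_psub hσ e n) hσ)
          (closed_scons (closed_iter_psub hτ e n) hτ) ?_
        rintro (_ | i)
        exacts [ih, h i]
    have := mu_le (f := psub σ 1 e) (a := 1) (b := 1) (c := cls (.mu (psub τ 1 e)))
      fun n => by simpa using (key n).trans (cls_iter_le_mu _ n)
    simpa [psub] using this

theorem cls_iter_psub_mono (e : Exp α) {σ τ : ℕ → Exp α} (hσ : ∀ i, (σ i).Closed)
    (hτ : ∀ i, (τ i).Closed) (h : ∀ i, cls (σ i) ≤ cls (τ i)) (n : ℕ) :
    cls (iter (psub σ 1 e) n) ≤ cls (iter (psub τ 1 e) n) := by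
  induction n with
  | zero => exact le_rfl
  | succ n ih =>
    rw [iter_psub_succ hσ, iter_psub_succ hτ]
    refine cls_psub_mono e (closed_scons (closed_iter_psub hσ e n) hσ)
      (closed_scons (closed_iter_psub hτ e n) hτ) ?_
    rintro (_ | i)
    exacts [ih, h i]

/-- `x` lies below every `h` that bounds the sequence `a`, and this remains so inside any
two-sided multiplicative context. -/
def LeSup (a : ℕ → TermAlg α) (x : TermAlg α) : Prop :=
  ∀ g g' h, (∀ n, g * a n * g' ≤ h) → g * x * g' ≤ h

/-- Continuity of expressions as functions of their free variables: if each `τ i` is below the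
supremum of the chain `n ↦ σ n i` in all contexts, then `e[τ]` is below the supremum of the
chain `n ↦ e[σ n]` in all contexts. -/
theorem leSup_psub (e : Exp α) : ∀ {σ : ℕ → ℕ → Exp α} {τ : ℕ → Exp α},
    (∀ n i, (σ n i).Closed) → (∀ i, (τ i).Closed) →
    (∀ i, Monotone fun n => cls (σ n i)) →
    (∀ i, LeSup (fun n => cls (σ n i)) (cls (τ i))) →
    LeSup (fun n => cls (psub (σ n) 0 e)) (cls (psub τ 0 e)) := by
  induction e with
  | zero | one | tok => intro σ τ _ _ _ _ g g' h H; exact H 0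
  | var n => intro σ τ _ _ _ hs; exact hs n
  | plus e f he hf =>
    intro σ τ hσ hτ hm hs g g' h H
    simp only [psub, cls_plus, mul_add, add_mul, add_le_iff] at H ⊢
    exact ⟨he hσ hτ hm hs g g' h fun n => (H n).1, hf hσ hτ hm hs g g' h fun n => (H n).2⟩
  | times e f he hf =>
    intro σ τ hσ hτ hm hs g g' h H
    simp only [psub, cls_times] at H ⊢
    have mono (e' : Exp α) : Monotone fun n => cls (psub (σ n) 0 e') := fun m n hmn =>
      cls_psub_mono e' (hσ m) (hσ n) fun i => hm i hmn
    -- The two factors are handled one after the other; the double sequence so obtained is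
    -- dominated by its diagonal.
    have h1 := he hσ hτ hm hs g (cls (psub τ 0 f) * g') h fun n => by
      have h2 := hf hσ hτ hm hs (g * cls (psub (σ n) 0 e)) g' h fun m => by
        refine le_trans ?_ (H (max n m))
        rw [← mul_assoc g]
        gcongr
        · exact mono e (le_max_left n m)
        · exact mono f (le_max_right n m)
      simpa only [mul_assoc] using h2
    simpa only [mul_assoc] using h1
  | mu e he =>
    intro σ τ hσ hτ hm hs g g' h H
    have key : ∀ m, LeSup (fun n => cls (iter (psub (σ n) 1 e) m))
        (cls (iter (psub τ 1 e) m)) := by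
      intro m
      induction m with
      | zero => intro g g' h H; exact H 0
      | succ m ih =>
        rw [iter_psub_succ hτ]
        simp only [fun n => iter_psub_succ (hσ n) e m]
        refine he (σ := fun n => scons (iter (psub (σ n) 1 e) m) (σ n))
          (fun n => closed_scons (closed_iter_psub (hσ n) e m) (hσ n))
          (closed_scons (closed_iter_psub hτ e m) hτ) ?_ ?_
        · rintro (_ | i)
          · exact fun n n' hn => cls_iter_psub_mono e (hσ n) (hσ n') (fun i => hm i hn) m
          · exact hm i
        · rintro (_ | i)
          exacts [ih, hs i]
    refine mu_le fun m => key m g g' h fun n => le_trans ?_ (H n)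
    gcongr
    exact cls_iter_le_mu _ m

/-- In `μCA`, `μX e` is a fixed point of `e`. -/
theorem cls_unfold {e : Exp α} (he : ClosedUnder 1 e) : cls e.unfold = cls (.mu e) := by
  have hmu : (Exp.mu e).Closed := he
  have hit := closed_iter he
  have succ_eq (n : ℕ) : iter e (n + 1) = psub (fun _ => iter e n) 0 e := subst_eq_psub he
  have iter_mono : Monotone fun n => cls (iter e n) := by
    refine monotone_nat_of_le_succ fun n => ?_
    induction n with
    | zero => exact bot_le
    | succ n ih =>
      rw [succ_eq n, succ_eq (n + 1)]
      exact cls_psub_mono e (fun _ => hit _) (fun _ => hit _) fun _ => ih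
  rw [unfold, subst_eq_psub he]
  apply le_antisymm
  · have := leSup_psub e (σ := fun n _ => iter e n) (τ := fun _ => .mu e)
      (fun n _ => hit n) (fun _ => hmu) (fun _ => iter_mono) (fun _ g g' h H => mu_le H)
      1 1 (cls (.mu e)) fun n => by
        beta_reduce; rw [← succ_eq]; simpa using cls_iter_le_mu e (n + 1)
    simpa using this
  · have := mu_le (f := e) (a := 1) (b := 1) (c := cls (psub (fun _ => .mu e) 0 e)) fun n => by
      rw [one_mul, mul_one]
      cases n with
      | zero => exact bot_le
      | succ n =>
        rw [succ_eq]
        exact cls_psub_mono e (fun _ => hit n) (fun _ => hmu) fun _ => cls_iter_le_mu e n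
    simpa using this

end Continuity

/-! ### Soundness of the rules -/

section Soundness

variable {α : Type}

/-- The value of a cedent in the term model. -/
def cedVal (Γ : Cedent α) : TermAlg α := (Γ.map cls).prod

@[simp] theorem cedVal_nil : cedVal ([] : Cedent α) = 1 := rfl

@[simp] theorem cedVal_cons (e : Exp α) (Γ : Cedent α) :
    cedVal (e :: Γ) = cls e * cedVal Γ := by simp [cedVal]

@[simp] theorem cedVal_append (Γ Δ : Cedent α) : cedVal (Γ ++ Δ) = cedVal Γ * cedVal Δ := by
  simp [cedVal]

theorem cls_prodCed (Γ : Cedent α) : cls (prodCed Γ) = cedVal Γ := by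
  induction Γ with
  | nil => rfl
  | cons e Γ ih => rw [cedVal_cons, ← ih]; rfl

theorem cls_sumRHS [DecidableEq α] (S : RHSet α) : cls (sumRHS S) = S.sup cedVal := by
  have h1 (l : List (Cedent α)) :
      cls ((l.map prodCed).foldr .plus .zero) = (l.map cedVal).sum := by
    induction l with
    | nil => rfl
    | cons Γ l ih => simp [ih, cls_prodCed]
  have h2 : ∑ Γ ∈ S, cedVal Γ = S.sup cedVal := by
    induction S using Finset.induction_on with
    | empty => rfl
    | insert Γ S h ih => rw [Finset.sum_insert h, Finset.sup_insert, ih, add_eq_sup]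
  rw [sumRHS, h1, Finset.sum_map_toList, h2]

theorem mul_sup_cedVal [DecidableEq α] (x : TermAlg α) (S : RHSet α) :
    x * S.sup cedVal = S.sup fun Δ => x * cedVal Δ :=
  Finset.apply_sup_eq_sup_comp (x * ·) (fun a b => by simp only [← add_eq_sup, mul_add])
    (mul_zero x)

theorem sup_cedVal_mul [DecidableEq α] (x : TermAlg α) (S : RHSet α) :
    S.sup cedVal * x = S.sup fun Δ => cedVal Δ * x :=
  Finset.apply_sup_eq_sup_comp (· * x) (fun a b => by simp only [← add_eq_sup, add_mul])
    (zero_mul x)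

@[simp] theorem cedClosed_cons {e : Exp α} {Γ : Cedent α} :
    CedClosed (e :: Γ) ↔ e.Closed ∧ CedClosed Γ := by simp [CedClosed]

@[simp] theorem cedClosed_append {Γ Δ : Cedent α} :
    CedClosed (Γ ++ Δ) ↔ CedClosed Γ ∧ CedClosed Δ := by
  simp [CedClosed, or_imp, forall_and]

theorem rule_prems_closed [DecidableEq α] (r : Rule α) (hc : r.concl.ClosedSeq) :
    ∀ s ∈ r.prems, s.ClosedSeq := by
  have h0 : ∀ {e f : Exp α}, (Exp.plus e f).Closed ↔ e.Closed ∧ f.Closed := Iff.rfl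
  have h1 : ∀ {e f : Exp α}, (Exp.times e f).Closed ↔ e.Closed ∧ f.Closed := Iff.rfl
  have h2 : ∀ {e : Exp α}, (Exp.mu e).Closed → e.unfold.Closed := fun h => Exp.closed_unfold h
  cases r <;>
    simp only [Rule.concl, Rule.prems, Sqt.ClosedSeq, List.mem_cons, List.not_mem_nil,
      or_false, false_imp_iff, implies_true, forall_eq, forall_eq_or_imp, Finset.mem_insert,
      Finset.forall_mem_image, cedClosed_cons, cedClosed_append, h0, h1] at hc ⊢ <;>
    grind

/-- Every rule of `μHKA` is sound in the term model. -/
theorem rule_sound [DecidableEq α] (r : Rule α) (hc : r.concl.ClosedSeq)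
    (h : ∀ s ∈ r.prems, cedVal s.lhs ≤ s.rhs.sup cedVal) :
    cedVal r.concl.lhs ≤ r.concl.rhs.sup cedVal := by
  cases r with
  | init => simp [Rule.concl]
  | wr Γ S Δ =>
    simp only [Rule.prems, List.mem_singleton, forall_eq] at h
    simpa [Rule.concl] using le_sup_of_le_right h
  | kl a Γ S =>
    simp only [Rule.prems, List.mem_singleton, forall_eq] at h
    have := mul_le_mul_right h (cls (.tok a))
    rw [mul_sup_cedVal] at this
    simpa [Rule.concl, Finset.sup_image, Function.comp_def] using this
  | kr a Γ S =>
    simp only [Rule.prems, List.mem_singleton, forall_eq] at h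
    have := mul_le_mul_left h (cls (.tok a))
    rw [sup_cedVal_mul] at this
    simpa [Rule.concl, Finset.sup_image, Function.comp_def] using this
  | zeroL => simp [Rule.concl]
  | muL Γ e Γ' S =>
    have he : (Exp.mu e).Closed := hc.1 _ (by simp [Rule.concl])
    simpa [Rule.concl, Rule.prems, cls_unfold he] using h
  | muR Γ S Δ e Δ' =>
    have he : (Exp.mu e).Closed :=
      hc.2 _ (Finset.mem_insert_self _ _) _ (by simp)
    simpa [Rule.concl, Rule.prems, cls_unfold he] using h
  | plusL Γ e f Γ' S =>
    have h1 : cedVal _ ≤ _ := h _ (List.mem_cons_self ..)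
    have h2 : cedVal _ ≤ _ := h _ (List.mem_cons_of_mem _ (List.mem_cons_self ..))
    simp only [Rule.concl, cedVal_append, cedVal_cons, cls_plus, add_mul, mul_add] at h1 h2 ⊢
    exact add_le h1 h2
  | plusR Γ S Δ e f Δ' =>
    simp only [Rule.prems, List.mem_singleton, forall_eq] at h
    simpa only [Rule.concl, Finset.sup_insert, cedVal_append, cedVal_cons, cls_plus, add_mul,
      mul_add, ← add_eq_sup, add_assoc] using h
  | oneL | timesL | zeroR | oneR | timesR =>
    simpa [Rule.concl, Rule.prems, mul_assoc] using h

theorem DerivW.sound [DecidableEq α] {s : Sqt α} (h : DerivW s) :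
    s.ClosedSeq → cedVal s.lhs ≤ s.rhs.sup cedVal := by
  induction h with
  | rule r _ ih =>
    intro hc
    exact rule_sound r hc fun s hs => ih s hs (rule_prems_closed r hc s hs)
  | omega Γ e Γ' S _ ih =>
    intro hc
    obtain ⟨hl, hr⟩ := hc
    simp only [cedClosed_append, cedClosed_cons] at hl
    have := mu_le (f := e) (a := cedVal Γ) (b := cedVal Γ') (c := S.sup cedVal) fun n => by
      have := ih n ⟨by simpa using ⟨hl.1, Exp.closed_iter hl.2.1 n, hl.2.2⟩, hr⟩
      simpa [mul_assoc] using this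
    simpa [mul_assoc] using this

end Soundness

/-- Proposition 4.1: if `Γ → S` has a wellfounded (possibly
infinitely branching) proof in `μHKA_ω`, then `μCA` derives `∏Γ ≤ Σ_{Δ∈S} ∏Δ`. -/
theorem soundness_muHKAomega_for_CA {α : Type} [Fintype α] [DecidableEq α] (s : Sqt α)
    (hc : s.ClosedSeq) (hg : s.GuardedSeq)
    (h : DerivW s) :
    CAle (prodCed s.lhs) (sumRHS s.rhs) := by
  rw [← cls_le_iff, cls_prodCed, cls_sumRHS]
  exact h.sound hc

end CFPT
end
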